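/- Let G, H, F be binary structures, let c < ω, and let (α,β) be a position arrived at in the pebble game Γ^c_n(B_{G,F}, B_{H,F}) during which ∃ plays using the mirroring strategy induced by a winning strategy in the parallel colouring game G^{c+3}_ω(G,H), and let (g,h) be the corresponding position of the parallel colouring game. Then for every relation-algebra term t whose variables are indexed by the common domain of α and β: if ∀ continues the colouring game by colouring γ(t) = {x ∈ G : g_x ≤ t^α} with a colour not previously used, then any response of ∃ other than colouring η(t) = {y ∈ H : g_y ≤ t^β} results in a position from which ∀ can force a win in G^{c+3}_ω(G,H); and symmetrically with the roles of γ(t) and η(t) exchanged. -/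

import Mathlib

/-! ## Binary structures -/

/-- A binary structure: a carrier set together with a family of binary relations
indexed by a signature `σ` consisting of binary predicate symbols. -/
structure BinStruct (σ : Type) : Type 1 where
  V : Type
  rel : σ → V → V → Prop

variable {σ : Type}

/-- The partial map `{(i,j),(i',j')}` is a partial homomorphism from `G` to `H`:
for all distinct elements of the domain and every binary predicate, the predicate
is preserved. -/
def PartialHom2 (G H : BinStruct σ) (i i' : G.V) (j j' : H.V) : Prop :=
  ∀ b : σ, (G.rel b i i' → H.rel b j j') ∧ (G.rel b i' i → H.rel b j' j)

/-- `f` is a (total) homomorphism from `G` to `H`. -/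
def IsHom (G H : BinStruct σ) (f : G.V → H.V) : Prop :=
  ∀ (b : σ) (u v : G.V), u ≠ v → G.rel b u v → H.rel b (f u) (f v)

/-! ## The rainbow atom structure -/

/-- Atoms of the rainbow relation algebra `B_{G,H}`. -/
inductive RbAtom (α β : Type) : Type
  | id : RbAtom α β
  | black : RbAtom α β
  | white : RbAtom α β
  | yellow : RbAtom α β
  | green (i : α) : RbAtom α β
  | red (j j' : β) : RbAtom α β

namespace RbAtom

/-- Converse of an atom: all atoms are self-converse except `(red j j')⌣ = red j' j`. -/
def conv {α β : Type} : RbAtom α β → RbAtom α β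
  | red j j' => red j' j
  | a => a

end RbAtom

/-- The generating forbidden triples (I)–(VI) of the rainbow algebra `B_{G,H}`. -/
inductive BaseForbidden (G H : BinStruct σ) :
    RbAtom G.V H.V → RbAtom G.V H.V → RbAtom G.V H.V → Prop
  | ident (a b : RbAtom G.V H.V) : a ≠ b → BaseForbidden G H .id a b
  | ggg (i i' i'' : G.V) : BaseForbidden G H (.green i) (.green i') (.green i'')
  | ggw (i i' : G.V) : BaseForbidden G H (.green i) (.green i') .white
  | yyy : BaseForbidden G H .yellow .yellow .yellow
  | yyb : BaseForbidden G H .yellow .yellow .black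
  | rrr (j₁ j₂ j₂' j₃' j₁s j₃s : H.V) : ¬(j₁ = j₁s ∧ j₂ = j₂' ∧ j₃' = j₃s) →
      BaseForbidden G H (.red j₁ j₂) (.red j₂' j₃') (.red j₁s j₃s)
  | ggr (i i' : G.V) (j j' : H.V) : ¬(i ≠ i' ∧ PartialHom2 G H i i' j j') →
      BaseForbidden G H (.green i) (.green i') (.red j j')

/-- A triple of atoms is forbidden if it is a Peircean transform of one of the
generating forbidden triples. -/
def Forbidden (G H : BinStruct σ) (a b c : RbAtom G.V H.V) : Prop :=
  ∃ x y z : RbAtom G.V H.V, BaseForbidden G H x y z ∧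
    ((a, b, c) = (x, y, z) ∨ (a, b, c) = (x.conv, z, y) ∨ (a, b, c) = (z, y.conv, x) ∨
     (a, b, c) = (y.conv, x.conv, z.conv) ∨ (a, b, c) = (y, z.conv, x.conv) ∨
     (a, b, c) = (z.conv, x, y.conv))

/-! ## The rainbow relation algebra (complex algebra of the atom structure) -/

/-- Composition in the complex algebra: `c ≤ X ; Y` iff there are `a ∈ X`, `b ∈ Y`
such that the triple `(a, b, c)` is not forbidden. -/
def rbComp (G H : BinStruct σ) (X Y : Set (RbAtom G.V H.V)) : Set (RbAtom G.V H.V) :=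
  {c | ∃ a ∈ X, ∃ b ∈ Y, ¬ Forbidden G H a b c}

/-- Converse in the complex algebra. -/
def rbConv {α β : Type} (X : Set (RbAtom α β)) : Set (RbAtom α β) :=
  {a | RbAtom.conv a ∈ X}

/-- The rainbow relation algebra `B_{G,H}` is completely representable: there is an
isomorphism onto an algebra of binary relations on some base set (with union,
complement, relational composition, converse and the identity relation) carrying
all suprema to unions. -/
def CompletelyRepresentable (G H : BinStruct σ) : Prop :=
  ∃ (X : Type) (θ : Set (RbAtom G.V H.V) → Set (X × X)),
    Function.Injective θ ∧
    (∀ S : Set (Set (RbAtom G.V H.V)), θ (⋃₀ S) = ⋃₀ (θ '' S)) ∧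
    (∀ A : Set (RbAtom G.V H.V), θ Aᶜ = θ Set.univ \ θ A) ∧
    (∀ A B : Set (RbAtom G.V H.V),
        θ (rbComp G H A B) = {p : X × X | ∃ z : X, (p.1, z) ∈ θ A ∧ (z, p.2) ∈ θ B}) ∧
    (∀ A : Set (RbAtom G.V H.V), θ (rbConv A) = {p : X × X | (p.2, p.1) ∈ θ A}) ∧
    θ {RbAtom.id} = {p : X × X | p.1 = p.2}

/-! ## The colouring game -/

/-- The set of vertices coloured (according to the interpretation `g`) with exactly
the colours in a palette `π`. -/
def PaletteSet {V : Type} {c : ℕ} (g : Fin c → Set V) (π : Set (Fin c)) : Set V :=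
  {x | ∀ t : Fin c, x ∈ g t ↔ t ∈ π}

/-- The position `(g,h)` of the `c`-colour colouring game on `(G,H)` is an immediate
win for ∀: (C1) some palette is realised in exactly one of the two structures, or
(C2) some pair of palettes and binary predicate produce a nonempty intersection in
exactly one of the two structures. -/
def ColWin (G H : BinStruct σ) (c : ℕ)
    (g : Fin c → Set G.V) (h : Fin c → Set H.V) : Prop :=
  (∃ π : Set (Fin c), Xor' (PaletteSet g π = ∅) (PaletteSet h π = ∅)) ∨
  (∃ (π π' : Set (Fin c)) (b : σ),
      Xor' ((PaletteSet g π ×ˢ PaletteSet g π') ∩ {q | G.rel b q.1 q.2} = ∅)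
           ((PaletteSet h π ×ˢ PaletteSet h π') ∩ {q | H.rel b q.1 q.2} = ∅))

/-- `∃` has a winning strategy in the infinitely long `c`-colour colouring game
`G^c_ω(G,H)` starting from the position `(g,h)`: there is an invariant family of safe
positions containing `(g,h)`, avoiding wins for `∀`, such that every move of `∀`
(a colour together with a set of vertices of either structure) has a response by `∃`
(a set of vertices of the other structure) staying in the family. -/
def ExSurvives (G H : BinStruct σ) (c : ℕ)
    (g : Fin c → Set G.V) (h : Fin c → Set H.V) : Prop :=
  ∃ Inv : (Fin c → Set G.V) → (Fin c → Set H.V) → Prop,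
    Inv g h ∧
    (∀ g' h', Inv g' h' → ¬ ColWin G H c g' h') ∧
    (∀ g' h', Inv g' h' → ∀ (t : Fin c) (S : Set G.V), ∃ T : Set H.V,
        Inv (Function.update g' t S) (Function.update h' t T)) ∧
    (∀ g' h', Inv g' h' → ∀ (t : Fin c) (T : Set H.V), ∃ S : Set G.V,
        Inv (Function.update g' t S) (Function.update h' t T))

/-- `∀` can force a win in the colouring game from the position `(g,h)`:
either the position is already a win for him, or he has a move such that
every response of `∃` leads to a position from which he can force a win. -/
inductive AllForcesWin (G H : BinStruct σ) (c : ℕ) :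
    (Fin c → Set G.V) → (Fin c → Set H.V) → Prop
  | now (g h) : ColWin G H c g h → AllForcesWin G H c g h
  | moveG (g h) (t : Fin c) (S : Set G.V) :
      (∀ T : Set H.V,
        AllForcesWin G H c (Function.update g t S) (Function.update h t T)) →
      AllForcesWin G H c g h
  | moveH (g h) (t : Fin c) (T : Set H.V) :
      (∀ S : Set G.V,
        AllForcesWin G H c (Function.update g t S) (Function.update h t T)) →
      AllForcesWin G H c g h

/-! ## Relation algebras, terms and formulas -/

/-- A relation algebra (Tarski's axioms): a Boolean algebra with an associative,
additive composition `;` with two-sided identity `1'`, and an additive involutive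
converse satisfying the Peircean/Tarski axioms. -/
class RelationAlgebra (A : Type) extends BooleanAlgebra A where
  comp : A → A → A
  conv : A → A
  one' : A
  comp_assoc : ∀ x y z : A, comp (comp x y) z = comp x (comp y z)
  comp_one' : ∀ x : A, comp x one' = x
  one'_comp : ∀ x : A, comp one' x = x
  sup_comp : ∀ x y z : A, comp (x ⊔ y) z = comp x z ⊔ comp y z
  comp_sup : ∀ x y z : A, comp x (y ⊔ z) = comp x y ⊔ comp x z
  conv_conv : ∀ x : A, conv (conv x) = x
  conv_sup : ∀ x y : A, conv (x ⊔ y) = conv x ⊔ conv y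
  conv_comp : ∀ x y : A, conv (comp x y) = comp (conv y) (conv x)
  tarski : ∀ x y : A, comp (conv x) (comp x y)ᶜ ⊓ y = ⊥

/-- A relation algebra is representable (a member of RRA) if it is isomorphic to a
subalgebra of an algebra of binary relations on some base set, with union,
complement, relational composition, converse and the identity relation. -/
def Representable (A : Type) [RelationAlgebra A] : Prop :=
  ∃ (X : Type) (θ : A → Set (X × X)),
    Function.Injective θ ∧
    (∀ a b : A, θ (a ⊔ b) = θ a ∪ θ b) ∧
    (∀ a : A, θ aᶜ = θ ⊤ \ θ a) ∧
    (∀ a b : A, θ (RelationAlgebra.comp a b) =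
        {p : X × X | ∃ z : X, (p.1, z) ∈ θ a ∧ (z, p.2) ∈ θ b}) ∧
    (∀ a : A, θ (RelationAlgebra.conv a) = {p : X × X | (p.2, p.1) ∈ θ a}) ∧
    θ RelationAlgebra.one' = {p : X × X | p.1 = p.2}

/-- A signature of relation-algebra operations on a carrier `A` (used to interpret
relation-algebra terms both in abstract relation algebras and in the concrete
rainbow complex algebras). -/
structure RAOps (A : Type) where
  bot : A
  top : A
  one' : A
  sup : A → A → A
  inf : A → A → A
  compl : A → A
  comp : A → A → A
  conv : A → A

/-- The operations of an abstract relation algebra. -/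
def RAOps.ofClass (A : Type) [RelationAlgebra A] : RAOps A :=
  ⟨⊥, ⊤, RelationAlgebra.one', (· ⊔ ·), (· ⊓ ·), (·ᶜ), RelationAlgebra.comp,
    RelationAlgebra.conv⟩

/-- The operations of the rainbow complex algebra `B_{G,H}`. -/
def rbOps (G H : BinStruct σ) : RAOps (Set (RbAtom G.V H.V)) :=
  ⟨∅, Set.univ, {RbAtom.id}, (· ∪ ·), (· ∩ ·), (·ᶜ), rbComp G H, rbConv⟩

/-- Terms in the language of relation algebras with variables `x_0, …, x_{c-1}`. -/
inductive RATerm (c : ℕ) : Type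
  | var (i : Fin c) : RATerm c
  | bot : RATerm c
  | top : RATerm c
  | one' : RATerm c
  | sup (s t : RATerm c) : RATerm c
  | inf (s t : RATerm c) : RATerm c
  | compl (t : RATerm c) : RATerm c
  | comp (s t : RATerm c) : RATerm c
  | conv (t : RATerm c) : RATerm c

namespace RATerm

variable {c : ℕ} {A : Type}

/-- Evaluation of a term under a total assignment of the variables. -/
def eval (ops : RAOps A) (v : Fin c → A) : RATerm c → A
  | var i => v i
  | bot => ops.bot
  | top => ops.top
  | one' => ops.one'
  | sup s t => ops.sup (s.eval ops v) (t.eval ops v)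
  | inf s t => ops.inf (s.eval ops v) (t.eval ops v)
  | compl t => ops.compl (t.eval ops v)
  | comp s t => ops.comp (s.eval ops v) (t.eval ops v)
  | conv t => ops.conv (t.eval ops v)

/-- Evaluation of a term under a partial assignment of the variables; defined
just when every variable of the term lies in the domain of the assignment. -/
def evalo (ops : RAOps A) (v : Fin c → Option A) : RATerm c → Option A
  | var i => v i
  | bot => some ops.bot
  | top => some ops.top
  | one' => some ops.one'
  | sup s t => (s.evalo ops v).bind fun a => (t.evalo ops v).map fun b => ops.sup a b
  | inf s t => (s.evalo ops v).bind fun a => (t.evalo ops v).map fun b => ops.inf a b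
  | compl t => (t.evalo ops v).map ops.compl
  | comp s t => (s.evalo ops v).bind fun a => (t.evalo ops v).map fun b => ops.comp a b
  | conv t => (t.evalo ops v).map ops.conv

/-- The variables occurring in a term. -/
def vars : RATerm c → Finset (Fin c)
  | var i => {i}
  | bot => ∅
  | top => ∅
  | one' => ∅
  | sup s t => s.vars ∪ t.vars
  | inf s t => s.vars ∪ t.vars
  | compl t => t.vars
  | comp s t => s.vars ∪ t.vars
  | conv t => t.vars

end RATerm

/-- First-order formulas in the language of relation algebras with variables
`x_0, …, x_{c-1}`. -/
inductive RAFormula (c : ℕ) : Type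
  | eq (s t : RATerm c) : RAFormula c
  | not (φ : RAFormula c) : RAFormula c
  | and (φ ψ : RAFormula c) : RAFormula c
  | ex (i : Fin c) (φ : RAFormula c) : RAFormula c

namespace RAFormula

variable {c : ℕ} {A : Type}

/-- Quantifier depth of a formula. -/
def qd : RAFormula c → ℕ
  | eq _ _ => 0
  | not φ => φ.qd
  | and φ ψ => max φ.qd ψ.qd
  | ex _ φ => φ.qd + 1

/-- Free variables of a formula. -/
def freeVars : RAFormula c → Finset (Fin c)
  | eq s t => s.vars ∪ t.vars
  | not φ => φ.freeVars
  | and φ ψ => φ.freeVars ∪ ψ.freeVars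
  | ex i φ => φ.freeVars \ {i}

/-- Satisfaction of a formula under a total assignment of the variables. -/
def Sat (ops : RAOps A) (v : Fin c → A) : RAFormula c → Prop
  | eq s t => s.eval ops v = t.eval ops v
  | not φ => ¬ Sat ops v φ
  | and φ ψ => Sat ops v φ ∧ Sat ops v ψ
  | ex i φ => ∃ a : A, Sat ops (Function.update v i a) φ

end RAFormula

/-! ## The pebble equivalence game on relation algebras -/

/-- The position `(α,β)` of the pebble game is good for `∃`: the two partial maps have
the same domain and the correspondence `t^α ↦ t^β` between the generated subalgebras
(given by evaluating terms whose variables lie in the common domain) is a well-defined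
isomorphism. -/
def GoodPos {A B : Type} (opsA : RAOps A) (opsB : RAOps B) (c : ℕ)
    (α : Fin c → Option A) (β : Fin c → Option B) : Prop :=
  (∀ i : Fin c, (α i).isSome ↔ (β i).isSome) ∧
  ∀ s t : RATerm c,
    (s.evalo opsA α = t.evalo opsA α ↔ s.evalo opsB β = t.evalo opsB β)

/-- `∃` has a winning strategy in the `c`-pebble, `n`-round equivalence game
`Γ^c_n(A, α, B, β)` (for finite `n`). -/
def ExWinsPebble {A B : Type} (opsA : RAOps A) (opsB : RAOps B) (c : ℕ) :
    ℕ → (Fin c → Option A) → (Fin c → Option B) → Prop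
  | 0, α, β => GoodPos opsA opsB c α β
  | n + 1, α, β => GoodPos opsA opsB c α β ∧
      (∀ (t : Fin c) (a : A), ∃ b : B,
        ExWinsPebble opsA opsB c n
          (Function.update α t (some a)) (Function.update β t (some b))) ∧
      (∀ (t : Fin c) (b : B), ∃ a : A,
        ExWinsPebble opsA opsB c n
          (Function.update α t (some a)) (Function.update β t (some b)))

/-- `∃` has a winning strategy in the infinitely long `c`-pebble equivalence game
`Γ^c_ω(A, α, B, β)`. -/
def ExWinsPebbleOmega {A B : Type} (opsA : RAOps A) (opsB : RAOps B) (c : ℕ)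
    (α : Fin c → Option A) (β : Fin c → Option B) : Prop :=
  ∃ Inv : (Fin c → Option A) → (Fin c → Option B) → Prop,
    Inv α β ∧
    (∀ α' β', Inv α' β' → GoodPos opsA opsB c α' β') ∧
    (∀ α' β', Inv α' β' → ∀ (t : Fin c) (a : A), ∃ b : B,
        Inv (Function.update α' t (some a)) (Function.update β' t (some b))) ∧
    (∀ α' β', Inv α' β' → ∀ (t : Fin c) (b : B), ∃ a : A,
        Inv (Function.update α' t (some a)) (Function.update β' t (some b)))

/-- `∃` has a winning strategy in the `c`-pebble, `n`-round equivalence game, where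
`n ≤ ω` (`n : ℕ∞`). -/
def ExWinsPebbleE {A B : Type} (opsA : RAOps A) (opsB : RAOps B) (c : ℕ)
    (n : ℕ∞) (α : Fin c → Option A) (β : Fin c → Option B) : Prop :=
  match n with
  | ⊤ => ExWinsPebbleOmega opsA opsB c α β
  | (m : ℕ) => ExWinsPebble opsA opsB c m α β

/-! ## The mirroring strategy -/

/-- The set of green subscripts of an element of a rainbow algebra. -/
def greenPart {V F : Type} (x : Set (RbAtom V F)) : Set V := {i | RbAtom.green i ∈ x}

/-- The element of the other rainbow algebra with the same non-green part as `x` and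
green part determined by `Y`. -/
def mirrorElt {V W F : Type} (x : Set (RbAtom V F)) (Y : Set W) : Set (RbAtom W F) :=
  fun a => match a with
  | RbAtom.green j => j ∈ Y
  | RbAtom.id => RbAtom.id ∈ x
  | RbAtom.black => RbAtom.black ∈ x
  | RbAtom.white => RbAtom.white ∈ x
  | RbAtom.yellow => RbAtom.yellow ∈ x
  | RbAtom.red j j' => RbAtom.red j j' ∈ x

/-- Inclusion of the first `c` colours into the `c+3` colours of the parallel game. -/
def liftCol {c : ℕ} (t : Fin c) : Fin (c + 3) := Fin.castLE (Nat.le_add_right c 3) t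

/-- A combined state of a play of the pebble game `Γ^c(B_{G,F}, B_{H,F})` together
with the parallel play of the colouring game `G^{c+3}_ω(G,H)`, recording also the
set of colours used so far. -/
structure MirrorState (c : ℕ) (G H F : BinStruct σ) : Type where
  α : Fin c → Option (Set (RbAtom G.V F.V))
  β : Fin c → Option (Set (RbAtom H.V F.V))
  g : Fin (c + 3) → Set G.V
  h : Fin (c + 3) → Set H.V
  used : Set (Fin (c + 3))

/-- The initial state: no pebbles placed, all vertices uncoloured, no colour used. -/
def mirrorInit (c : ℕ) (G H F : BinStruct σ) : MirrorState c G H F :=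
  ⟨fun _ => none, fun _ => none, fun _ => ∅, fun _ => ∅, ∅⟩

/-- `Inv` is a winning invariant witnessing a winning strategy for `∃` in the
colouring game `G^c_ω(G,H)` (from the initial position). -/
def IsColInvariant (G H : BinStruct σ) (c : ℕ)
    (Inv : (Fin c → Set G.V) → (Fin c → Set H.V) → Prop) : Prop :=
  Inv (fun _ => ∅) (fun _ => ∅) ∧
  (∀ g h, Inv g h → ¬ ColWin G H c g h) ∧
  (∀ g h, Inv g h → ∀ (t : Fin c) (S : Set G.V), ∃ T : Set H.V,
      Inv (Function.update g t S) (Function.update h t T)) ∧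
  (∀ g h, Inv g h → ∀ (t : Fin c) (T : Set H.V), ∃ S : Set G.V,
      Inv (Function.update g t S) (Function.update h t T))

/-- One round of the pebble game `Γ^c(B_{G,F}, B_{H,F})` in which `∃` plays the
mirroring strategy induced by the colouring-game winning strategy witnessed by the
invariant `Inv`: when `∀` plays pebble `t` on an element of one algebra, `∃` colours
the set of its green subscripts with colour `t` in the parallel colouring game,
obtains a response keeping the parallel play inside `Inv`, and answers with the
element with identical non-green part and green part determined by that response. -/
inductive MirrorStep (G H F : BinStruct σ) (c : ℕ)
    (Inv : (Fin (c + 3) → Set G.V) → (Fin (c + 3) → Set H.V) → Prop) :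
    MirrorState c G H F → MirrorState c G H F → Prop
  | fromG (s : MirrorState c G H F) (t : Fin c) (x : Set (RbAtom G.V F.V)) (Y : Set H.V) :
      Inv (Function.update s.g (liftCol t) (greenPart x))
          (Function.update s.h (liftCol t) Y) →
      MirrorStep G H F c Inv s
        ⟨Function.update s.α t (some x),
         Function.update s.β t (some (mirrorElt x Y)),
         Function.update s.g (liftCol t) (greenPart x),
         Function.update s.h (liftCol t) Y,
         insert (liftCol t) s.used⟩
  | fromH (s : MirrorState c G H F) (t : Fin c) (y : Set (RbAtom H.V F.V)) (X : Set G.V) :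
      Inv (Function.update s.g (liftCol t) X)
          (Function.update s.h (liftCol t) (greenPart y)) →
      MirrorStep G H F c Inv s
        ⟨Function.update s.α t (some (mirrorElt y X)),
         Function.update s.β t (some y),
         Function.update s.g (liftCol t) X,
         Function.update s.h (liftCol t) (greenPart y),
         insert (liftCol t) s.used⟩

/-- The states reachable in a play of the pebble game `Γ^c(B_{G,F}, B_{H,F})`
during which `∃` plays using the mirroring strategy. -/
def MirrorReachable (G H F : BinStruct σ) (c : ℕ)
    (Inv : (Fin (c + 3) → Set G.V) → (Fin (c + 3) → Set H.V) → Prop)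
    (s : MirrorState c G H F) : Prop :=
  Relation.ReflTransGen (MirrorStep G H F c Inv) (mirrorInit c G H F) s

/-!
Suppose `∃` survives from a position `(g, h)`. Call vertices `x`, `y` linked if she also survives
from some position which agrees with `(g, h)` on a fixed set `U` of colours and in which a colour
outside `U` marks exactly `x` and exactly `y`. With two colours outside `U`, `∀` can keep one linked
pair marked while he marks a further vertex, so links form a two-pebble back-and-forth system, and
linked vertices carry the same colours of `U`.

A composition of rainbow atoms never involves three green atoms. Hence a two-pebble
back-and-forth system suffices to match the witnesses of a composition in `B_{G,F}` with witnesses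
in `B_{H,F}`, and the values of a term in the two algebras have the same non-green part and linked
green parts. A colour that marks the green part of one value in a position survived by `∃` must
therefore mark the green part of the other.
-/

/-! ## Positions survived by `∃` -/

section ColouringGame

variable {G H : BinStruct σ} {n : ℕ} {g : Fin n → Set G.V} {h : Fin n → Set H.V}

theorem exSurvives_of_not_allForcesWin (hw : ¬ AllForcesWin G H n g h) :
    ExSurvives G H n g h := by
  refine ⟨fun g h => ¬ AllForcesWin G H n g h, hw, fun _ _ hs hc => hs (.now _ _ hc),
    fun g h hs t S => ?_, fun g h hs t T => ?_⟩
  · by_contra! hT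
    exact hs (.moveG g h t S hT)
  · by_contra! hS
    exact hs (.moveH g h t T hS)

theorem ColWin.symm : ColWin G H n g h → ColWin H G n h g
  | .inl ⟨π, hπ⟩ => .inl ⟨π, hπ.symm⟩
  | .inr ⟨π, π', b, hb⟩ => .inr ⟨π, π', b, hb.symm⟩

theorem ExSurvives.symm : ExSurvives G H n g h → ExSurvives H G n h g
  | ⟨Inv, h₀, hwin, hforth, hback⟩ =>
    ⟨fun h g => Inv g h, h₀, fun h g hi hw => hwin g h hi hw.symm,
      fun h g hi => hback g h hi, fun h g hi => hforth g h hi⟩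

theorem ExSurvives.exists_update (hs : ExSurvives G H n g h) (t : Fin n) (S : Set G.V) :
    ∃ T : Set H.V, ExSurvives G H n (Function.update g t S) (Function.update h t T) := by
  obtain ⟨Inv, hi, hwin, hforth, hback⟩ := hs
  obtain ⟨T, hT⟩ := hforth g h hi t S
  exact ⟨T, Inv, hT, hwin, hforth, hback⟩

theorem ExSurvives.not_colWin (hs : ExSurvives G H n g h) : ¬ ColWin G H n g h :=
  let ⟨_, hi, hwin, _⟩ := hs
  hwin g h hi

/-- The vertices `x` and `y` carry exactly the same colours in the position `(g, h)`. -/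
def SamePalette (g : Fin n → Set G.V) (h : Fin n → Set H.V) (x : G.V) (y : H.V) : Prop :=
  ∀ t, x ∈ g t ↔ y ∈ h t

theorem SamePalette.eq_iff_eq {u x : G.V} {v y : H.V} {k : Fin n} (hp : SamePalette g h u v)
    (hx : g k = {x}) (hy : h k = {y}) : u = x ↔ v = y := by
  simpa only [hx, hy, Set.mem_singleton_iff] using hp k

theorem exists_samePalette (hw : ¬ ColWin G H n g h) (x : G.V) : ∃ y, SamePalette g h x y := by
  obtain ⟨hpal, -⟩ := not_or.1 hw
  have hne : PaletteSet g {t | x ∈ g t} ≠ ∅ := Set.Nonempty.ne_empty ⟨x, fun _ => Iff.rfl⟩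
  have hiff := (not_xor _ _).1 (not_exists.1 hpal {t | x ∈ g t})
  obtain ⟨y, hy⟩ := Set.nonempty_iff_ne_empty.2 (hiff.not.1 hne)
  exact ⟨y, fun t => (hy t).symm⟩

theorem exists_samePalette_rel (hw : ¬ ColWin G H n g h) {b : σ} {x x' : G.V}
    (hr : G.rel b x x') :
    ∃ y y', SamePalette g h x y ∧ SamePalette g h x' y' ∧ H.rel b y y' := by
  obtain ⟨-, hrel⟩ := not_or.1 hw
  push Not at hrel
  have hne : (PaletteSet g {t | x ∈ g t} ×ˢ PaletteSet g {t | x' ∈ g t}) ∩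
      {q | G.rel b q.1 q.2} ≠ ∅ :=
    Set.Nonempty.ne_empty ⟨(x, x'), ⟨fun _ => Iff.rfl, fun _ => Iff.rfl⟩, hr⟩
  have hiff := (not_xor _ _).1 (hrel {t | x ∈ g t} {t | x' ∈ g t} b)
  obtain ⟨⟨y, y'⟩, ⟨hy, hy'⟩, hr'⟩ := Set.nonempty_iff_ne_empty.2 (hiff.not.1 hne)
  exact ⟨y, y', fun t => (hy t).symm, fun t => (hy' t).symm, hr'⟩

end ColouringGame

/-! ## Back-and-forth systems -/

section BackForth

variable {G H : BinStruct σ}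

/-- The converse of `R` is an injective partial homomorphism from `H` to `G`. -/
def ReflectsRel (G H : BinStruct σ) (R : SetRel G.V H.V) : Prop :=
  ∀ ⦃x y x' y'⦄, (x, y) ∈ R → (x', y') ∈ R →
    (x = x' ↔ y = y') ∧ (x ≠ x' → PartialHom2 H G y y' x x')

theorem PartialHom2.swap {i i' : G.V} {j j' : H.V} (hp : PartialHom2 G H i i' j j') :
    PartialHom2 G H i' i j' j :=
  fun b => (hp b).symm

theorem PartialHom2.comp {F : BinStruct σ} {i i' : G.V} {j j' : H.V} {k k' : F.V}
    (hp : PartialHom2 G H i i' j j') (hq : PartialHom2 H F j j' k k') :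
    PartialHom2 G F i i' k k' :=
  fun b => ⟨(hq b).1 ∘ (hp b).1, (hq b).2 ∘ (hp b).2⟩

theorem reflectsRel_pair {x x' : G.V} {y y' : H.V} (heq : x = x' ↔ y = y')
    (hhom : x ≠ x' → PartialHom2 H G y y' x x') :
    ReflectsRel G H {(x, y), (x', y')} := by
  rintro u v u' v' (⟨⟨⟩⟩ | ⟨⟨⟩⟩) (⟨⟨⟩⟩ | ⟨⟨⟩⟩)
  · exact ⟨by simp, fun hne => absurd rfl hne⟩
  · exact ⟨heq, hhom⟩
  · exact ⟨by rw [eq_comm, heq, eq_comm], fun hne => (hhom hne.symm).swap⟩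
  · exact ⟨by simp, fun hne => absurd rfl hne⟩

/-- The forth half of a two-pebble back-and-forth system of links between `G` and `H`. Relations are
only reflected from `H` to `G`; the other direction is the back half, `HasForth H G L.inv`. -/
structure HasForth (G H : BinStruct σ) (L : SetRel G.V H.V) : Prop where
  total : ∀ x, ∃ y, (x, y) ∈ L
  forth : ∀ ⦃x y⦄, (x, y) ∈ L → ∀ x', ∃ y', (x', y') ∈ L ∧ ReflectsRel G H {(x, y), (x', y')}

end BackForth

/-! ## Linked vertices -/

section Linked

variable {G H : BinStruct σ} {n : ℕ} {U : Set (Fin n)}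
  {g g' : Fin n → Set G.V} {h h' : Fin n → Set H.V}

/-- The position `(g', h')` is survived by `∃` and agrees with `(g, h)` on the colours in `U`. -/
structure SurvivingVariant (U : Set (Fin n)) (g : Fin n → Set G.V) (h : Fin n → Set H.V)
    (g' : Fin n → Set G.V) (h' : Fin n → Set H.V) : Prop where
  survives : ExSurvives G H n g' h'
  eqOn_left : Set.EqOn g' g U
  eqOn_right : Set.EqOn h' h U

/-- The pairs of vertices that can be marked by singletons of a colour outside `U` in a position
which is survived by `∃` and agrees with `(g, h)` on `U`. -/
def linked (U : Set (Fin n)) (g : Fin n → Set G.V) (h : Fin n → Set H.V) : SetRel G.V H.V :=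
  {p | ∃ g' h', SurvivingVariant U g h g' h' ∧ ∃ k ∉ U, g' k = {p.1} ∧ h' k = {p.2}}

theorem ExSurvives.survivingVariant (hs : ExSurvives G H n g h) : SurvivingVariant U g h g h :=
  ⟨hs, Set.eqOn_refl g U, Set.eqOn_refl h U⟩

theorem SurvivingVariant.symm (P : SurvivingVariant U g h g' h') : SurvivingVariant U h g h' g' :=
  ⟨P.survives.symm, P.eqOn_right, P.eqOn_left⟩

theorem inv_linked : (linked U g h).inv = linked U h g :=
  Set.ext fun _ =>
    ⟨fun ⟨g', h', P, k, hk, hx, hy⟩ => ⟨h', g', P.symm, k, hk, hy, hx⟩,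
      fun ⟨h', g', P, k, hk, hy, hx⟩ => ⟨g', h', P.symm, k, hk, hx, hy⟩⟩

theorem SurvivingVariant.exists_update (P : SurvivingVariant U g h g' h') {k : Fin n} (hk : k ∉ U)
    (S : Set G.V) :
    ∃ T : Set H.V, SurvivingVariant U g h (Function.update g' k S) (Function.update h' k T) := by
  obtain ⟨T, hT⟩ := P.survives.exists_update k S
  have hne : ∀ u ∈ U, u ≠ k := fun u hu huk => hk (huk ▸ hu)
  exact ⟨T, hT, fun u hu => (Function.update_of_ne (hne u hu) ..).trans (P.eqOn_left hu),
    fun u hu => (Function.update_of_ne (hne u hu) ..).trans (P.eqOn_right hu)⟩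

theorem SurvivingVariant.exists_samePalette (P : SurvivingVariant U g h g' h') (x : G.V) :
    ∃ y, SamePalette g' h' x y :=
  _root_.exists_samePalette P.survives.not_colWin x

theorem SurvivingVariant.mk_mem_linked (P : SurvivingVariant U g h g' h') (hU : Uᶜ.Nontrivial)
    {k : Fin n} {x : G.V} {y : H.V} (hx : g' k = {x}) (hy : y ∈ h' k) :
    (x, y) ∈ linked U g h := by
  obtain ⟨k', hk', hne⟩ := hU.exists_ne k
  obtain ⟨S, P'⟩ := P.symm.exists_update hk' {y}
  suffices hS : S = {x} from
    ⟨_, _, P'.symm, k', hk', by simp only [Function.update_self, hS], Function.update_self ..⟩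
  refine Set.eq_singleton_iff_nonempty_unique_mem.2 ⟨?_, fun v hv => ?_⟩
  · obtain ⟨u, hu⟩ := P'.exists_samePalette y
    exact ⟨u, by simpa using hu k'⟩
  · obtain ⟨w, hw⟩ := P'.symm.exists_samePalette v
    have hwy : w = y := by simpa [hv] using hw k'
    have hiff : v ∈ g' k ↔ w ∈ h' k := by simpa [hne.symm] using hw k
    simpa only [hx, Set.mem_singleton_iff] using hiff.2 (hwy ▸ hy)

theorem SurvivingVariant.exists_update_singleton (P : SurvivingVariant U g h g' h')
    (hU : Uᶜ.Nontrivial) {k : Fin n} (hk : k ∉ U) (x : G.V) :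
    ∃ y T, SurvivingVariant U g h (Function.update g' k {x}) (Function.update h' k T) ∧
      y ∈ T ∧ (∀ t ≠ k, x ∈ g' t ↔ y ∈ h' t) ∧ (x, y) ∈ linked U g h := by
  obtain ⟨T, P'⟩ := P.exists_update hk {x}
  obtain ⟨y, hy⟩ := P'.exists_samePalette x
  have hyT : y ∈ T := by simpa using hy k
  exact ⟨y, T, P', hyT, fun t ht => by simpa [ht] using hy t,
    P'.mk_mem_linked hU (k := k) (Function.update_self ..) (by simpa using hyT)⟩

theorem SurvivingVariant.partialHom2 (P : SurvivingVariant U g h g' h') {k k' : Fin n}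
    {x x' : G.V} {y y' : H.V} (hx : g' k = {x}) (hx' : g' k' = {x'})
    (hy : y ∈ h' k) (hy' : y' ∈ h' k') : PartialHom2 H G y y' x x' := by
  have eq_of_samePalette : ∀ {l u v z}, g' l = {u} → v ∈ h' l → SamePalette h' g' v z → z = u :=
    fun hu hv hp => by simpa only [hu, Set.mem_singleton_iff] using (hp _).1 hv
  have hw := P.symm.survives.not_colWin
  refine fun b => ⟨fun hr => ?_, fun hr => ?_⟩
  · obtain ⟨z, z', hz, hz', hr'⟩ := exists_samePalette_rel hw hr
    rwa [eq_of_samePalette hx hy hz, eq_of_samePalette hx' hy' hz'] at hr'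
  · obtain ⟨z', z, hz', hz, hr'⟩ := exists_samePalette_rel hw hr
    rwa [eq_of_samePalette hx hy hz, eq_of_samePalette hx' hy' hz'] at hr'

theorem ExSurvives.hasForth_linked (hs : ExSurvives G H n g h) (hU : Uᶜ.Nontrivial) :
    HasForth G H (linked U g h) where
  total x := by
    obtain ⟨k, hk⟩ := hU.nonempty
    obtain ⟨y, -, -, -, -, hxy⟩ := hs.survivingVariant.exists_update_singleton hU hk x
    exact ⟨y, hxy⟩
  forth := by
    rintro x y ⟨g', h', P, k, -, hx, hy⟩ x'
    obtain ⟨k', hk', hne⟩ := hU.exists_ne k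
    obtain ⟨y', T, P', hy'T, hpal, hlink⟩ := P.exists_update_singleton hU hk' x'
    refine ⟨y', hlink, reflectsRel_pair ?_ fun _ => ?_⟩
    · simpa only [hx, hy, Set.mem_singleton_iff, eq_comm] using hpal k hne.symm
    · exact P'.partialHom2 (k := k) (k' := k') (by simp [hne.symm, hx]) (by simp)
        (by simp [hne.symm, hy]) (by simpa using hy'T)

theorem mem_iff_mem_of_linked {x : G.V} {y : H.V} (hxy : (x, y) ∈ linked U g h)
    {u : Fin n} (hu : u ∈ U) : x ∈ g u ↔ y ∈ h u := by
  obtain ⟨g', h', P, k, -, hx, hy⟩ := hxy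
  obtain ⟨z, hz⟩ := P.exists_samePalette x
  obtain rfl := (hz.eq_iff_eq hx hy).1 rfl
  simpa only [P.eqOn_left hu, P.eqOn_right hu] using hz u

theorem ExSurvives.colour_eq_of_linked (hs : ExSurvives G H n g h) (hU : Uᶜ.Nontrivial)
    {γ : Set G.V} {η : Set H.V} (hγη : ∀ x y, (x, y) ∈ linked U g h → (x ∈ γ ↔ y ∈ η))
    {k : Fin n} (hk : g k = γ) : h k = η := by
  ext y
  obtain ⟨k', hk', hne⟩ := hU.exists_ne k
  obtain ⟨x, -, -, -, hpal, hyx⟩ := hs.symm.survivingVariant.exists_update_singleton hU hk' y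
  rw [hpal k hne.symm, hk]
  exact hγη x y (inv_linked.symm.subset hyx)

theorem ExSurvives.colour_eq_iff (hs : ExSurvives G H n g h) (hU : Uᶜ.Nontrivial)
    {γ : Set G.V} {η : Set H.V} (hγη : ∀ x y, (x, y) ∈ linked U g h → (x ∈ γ ↔ y ∈ η))
    (k : Fin n) : g k = γ ↔ h k = η :=
  ⟨hs.colour_eq_of_linked hU hγη, hs.symm.colour_eq_of_linked hU fun y x hyx =>
    (hγη x y (inv_linked.symm.subset hyx)).symm⟩

end Linked

/-! ## Atoms of rainbow algebras -/

section RainbowAtoms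

variable {V W F : Type}

namespace RbAtom

theorem conv_conv (a : RbAtom V F) : a.conv.conv = a := by
  cases a <;> rfl

/-- The relation between the atoms of two rainbow algebras induced by a relation `R` between their
green subscripts: each non-green atom is related only to itself. -/
inductive LiftRel (R : SetRel V W) : RbAtom V F → RbAtom W F → Prop
  | id : LiftRel R .id .id
  | black : LiftRel R .black .black
  | white : LiftRel R .white .white
  | yellow : LiftRel R .yellow .yellow
  | green {i : V} {j : W} : (i, j) ∈ R → LiftRel R (.green i) (.green j)
  | red (j j' : F) : LiftRel R (.red j j') (.red j j')

namespace LiftRel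

variable {R L : SetRel V W} {a : RbAtom V F} {a' : RbAtom W F}

theorem mono (hRL : R ⊆ L) (ha : LiftRel R a a') : LiftRel L a a' := by
  cases ha with
  | green hij => exact .green (hRL hij)
  | _ => constructor

theorem conv (ha : LiftRel R a a') : LiftRel R a.conv a'.conv := by
  cases ha with
  | green hij => exact .green hij
  | _ => constructor

theorem inv (ha : LiftRel R a a') : LiftRel R.inv a' a := by
  cases ha with
  | green hij => exact .green hij
  | _ => constructor

theorem green_or_forall (ha : LiftRel R a a') :
    (∃ i j, a = .green i ∧ a' = .green j ∧ (i, j) ∈ R) ∨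
      ∀ R' : SetRel V W, LiftRel R' a a' := by
  cases ha with
  | green hij => exact .inl ⟨_, _, rfl, rfl, hij⟩
  | _ => exact .inr fun _ => by constructor

end LiftRel

theorem green_or_exists_liftRel (W : Type) (a : RbAtom V F) :
    (∃ i, a = .green i) ∨ ∃ a' : RbAtom W F, ∀ R : SetRel V W, LiftRel R a a' := by
  cases a with
  | green i => exact .inl ⟨i, rfl⟩
  | id => exact .inr ⟨_, fun _ => .id⟩
  | black => exact .inr ⟨_, fun _ => .black⟩
  | white => exact .inr ⟨_, fun _ => .white⟩
  | yellow => exact .inr ⟨_, fun _ => .yellow⟩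
  | red j j' => exact .inr ⟨_, fun _ => .red j j'⟩

end RbAtom

variable {G H F : BinStruct σ} {R L : SetRel G.V H.V} {a b c : RbAtom G.V F.V}
  {a' b' c' : RbAtom H.V F.V}

theorem ReflectsRel.eq_of_liftRel (hR : ReflectsRel G H R) (ha : RbAtom.LiftRel R a a')
    (hb : RbAtom.LiftRel R a b') : a' = b' := by
  cases ha with
  | green hij =>
    cases hb with | green hij' =>
    exact congrArg _ ((hR hij hij').1.1 rfl)
  | _ => cases hb; rfl

theorem ReflectsRel.baseForbidden (hR : ReflectsRel G H R) (ha : RbAtom.LiftRel R a a')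
    (hb : RbAtom.LiftRel R b b') (hc : RbAtom.LiftRel R c c')
    (hf : BaseForbidden H F a' b' c') : BaseForbidden G F a b c := by
  cases hf with
  | ident _ _ hne =>
    cases ha
    exact .ident _ _ fun hbc => hne (hR.eq_of_liftRel hb (hbc ▸ hc))
  | ggr _ _ _ _ hn =>
    cases hc
    cases ha with | green hij =>
    cases hb with | green hij' =>
    refine .ggr _ _ _ _ fun ⟨hne, hp⟩ => hn ?_
    obtain ⟨heq, hhom⟩ := hR hij hij'
    exact ⟨heq.not.1 hne, (hhom hne).comp hp⟩
  | ggg => cases ha; cases hb; cases hc; exact .ggg ..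
  | ggw => cases ha; cases hb; cases hc; exact .ggw ..
  | yyy => cases ha; cases hb; cases hc; exact .yyy
  | yyb => cases ha; cases hb; cases hc; exact .yyb
  | rrr _ _ _ _ _ _ hn => cases ha; cases hb; cases hc; exact .rrr _ _ _ _ _ _ hn

theorem ReflectsRel.forbidden (hR : ReflectsRel G H R) (ha : RbAtom.LiftRel R a a')
    (hb : RbAtom.LiftRel R b b') (hc : RbAtom.LiftRel R c c') (hf : Forbidden H F a' b' c') :
    Forbidden G F a b c := by
  have hac := ha.conv
  have hbc := hb.conv
  have hcc := hc.conv
  obtain ⟨p, q, r, hbase, htransform⟩ := hf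
  simp only [Prod.mk.injEq] at htransform
  rcases htransform with ⟨rfl, rfl, rfl⟩ | ⟨rfl, rfl, rfl⟩ | ⟨rfl, rfl, rfl⟩ | ⟨rfl, rfl, rfl⟩ |
    ⟨rfl, rfl, rfl⟩ | ⟨rfl, rfl, rfl⟩ <;>
    try simp only [RbAtom.conv_conv] at hac hbc hcc
  · exact ⟨a, b, c, hR.baseForbidden ha hb hc hbase, by simp⟩
  · exact ⟨a.conv, c, b, hR.baseForbidden hac hc hb hbase, by simp [RbAtom.conv_conv]⟩
  · exact ⟨c, b.conv, a, hR.baseForbidden hc hbc ha hbase, by simp [RbAtom.conv_conv]⟩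
  · exact ⟨b.conv, a.conv, c.conv, hR.baseForbidden hbc hac hcc hbase,
      by simp [RbAtom.conv_conv]⟩
  · exact ⟨c.conv, a, b.conv, hR.baseForbidden hcc ha hbc hbase, by simp [RbAtom.conv_conv]⟩
  · exact ⟨b, c.conv, a.conv, hR.baseForbidden hb hcc hac hbase, by simp [RbAtom.conv_conv]⟩

theorem HasForth.exists_liftRel (hL : HasForth G H L) {x : G.V} {y : H.V} (hxy : (x, y) ∈ L)
    (a : RbAtom G.V F.V) :
    ∃ R ⊆ L, ReflectsRel G H R ∧ (x, y) ∈ R ∧ ∃ a' : RbAtom H.V F.V, RbAtom.LiftRel R a a' := by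
  have exists_pair (i : G.V) :
      ∃ j, ∃ R ⊆ L, ReflectsRel G H R ∧ (x, y) ∈ R ∧ (i, j) ∈ R := by
    obtain ⟨j, hij, hR⟩ := hL.forth hxy i
    exact ⟨j, {(x, y), (i, j)}, Set.pair_subset hxy hij, hR, by simp, by simp⟩
  rcases a.green_or_exists_liftRel H.V with ⟨i, rfl⟩ | ⟨a', ha⟩
  · obtain ⟨j, R, hRL, hR, hxyR, hijR⟩ := exists_pair i
    exact ⟨R, hRL, hR, hxyR, .green j, .green hijR⟩
  · obtain ⟨-, R, hRL, hR, hxyR, -⟩ := exists_pair x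
    exact ⟨R, hRL, hR, hxyR, a', ha R⟩

/-- Rule (II) keeps `a`, `b`, `c` from all being green, so two linked pairs match the triple. -/
theorem HasForth.exists_liftRel_triple (hL : HasForth G H L) (hc : RbAtom.LiftRel L c c')
    (hn : ¬ Forbidden G F a b c) :
    ∃ R ⊆ L, ReflectsRel G H R ∧ RbAtom.LiftRel R c c' ∧
      ∃ a' b', RbAtom.LiftRel R a a' ∧ RbAtom.LiftRel R b b' := by
  rcases hc.green_or_forall with ⟨x, y, rfl, rfl, hxy⟩ | hc
  · rcases a.green_or_exists_liftRel H.V with ⟨i, rfl⟩ | ⟨a', ha⟩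
    · rcases b.green_or_exists_liftRel H.V with ⟨i', rfl⟩ | ⟨b', hb⟩
      · exact absurd ⟨_, _, _, .ggg i i' x, .inl rfl⟩ hn
      · obtain ⟨R, hRL, hR, hxyR, a', ha⟩ := hL.exists_liftRel hxy (.green i)
        exact ⟨R, hRL, hR, .green hxyR, a', b', ha, hb R⟩
    · obtain ⟨R, hRL, hR, hxyR, b', hb⟩ := hL.exists_liftRel hxy b
      exact ⟨R, hRL, hR, .green hxyR, a', b', ha R, hb⟩
  · rcases a.green_or_exists_liftRel H.V with ⟨i, rfl⟩ | ⟨a', ha⟩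
    · obtain ⟨j, hij⟩ := hL.total i
      obtain ⟨R, hRL, hR, hijR, b', hb⟩ := hL.exists_liftRel hij b
      exact ⟨R, hRL, hR, hc R, .green j, b', .green hijR, hb⟩
    · rcases b.green_or_exists_liftRel H.V with ⟨i, rfl⟩ | ⟨b', hb⟩
      · obtain ⟨j, hij⟩ := hL.total i
        obtain ⟨R, hRL, hR, hijR, -⟩ := hL.exists_liftRel hij (.green i : RbAtom G.V F.V)
        exact ⟨R, hRL, hR, hc R, a', .green j, ha R, .green hijR⟩
      · exact ⟨∅, Set.empty_subset L, fun _ _ _ _ hxy => hxy.elim, hc ∅, a', b', ha ∅, hb ∅⟩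

end RainbowAtoms

/-! ## Elements of rainbow algebras -/

section Corresponds

variable {V W F : Type} {R : SetRel V W} {X X' : Set (RbAtom V F)} {Y Y' : Set (RbAtom W F)}

/-- The elements `X` and `Y` of two rainbow algebras have the same non-green part, and `R` relates
green subscripts of `X` only to green subscripts of `Y`, and non-subscripts to non-subscripts. -/
def Corresponds (R : SetRel V W) (X : Set (RbAtom V F)) (Y : Set (RbAtom W F)) : Prop :=
  ∀ ⦃a a'⦄, RbAtom.LiftRel R a a' → (a ∈ X ↔ a' ∈ Y)

namespace Corresponds

theorem inv (hXY : Corresponds R X Y) : Corresponds R.inv Y X :=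
  fun _ _ ha => (hXY ha.inv).symm

theorem mem_greenPart_iff (hXY : Corresponds R X Y) {i : V} {j : W} (hij : (i, j) ∈ R) :
    i ∈ greenPart X ↔ j ∈ greenPart Y :=
  hXY (.green hij)

theorem empty : Corresponds R (∅ : Set (RbAtom V F)) (∅ : Set (RbAtom W F)) :=
  fun _ _ _ => Iff.rfl

theorem univ : Corresponds R (Set.univ : Set (RbAtom V F)) (Set.univ : Set (RbAtom W F)) :=
  fun _ _ _ => Iff.rfl

theorem singleton_id : Corresponds R ({.id} : Set (RbAtom V F)) ({.id} : Set (RbAtom W F)) := by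
  intro a a' ha
  cases ha <;> simp

theorem compl (hXY : Corresponds R X Y) : Corresponds R Xᶜ Yᶜ :=
  fun _ _ ha => (hXY ha).not

theorem union (hXY : Corresponds R X Y) (hXY' : Corresponds R X' Y') :
    Corresponds R (X ∪ X') (Y ∪ Y') :=
  fun _ _ ha => or_congr (hXY ha) (hXY' ha)

theorem inter (hXY : Corresponds R X Y) (hXY' : Corresponds R X' Y') :
    Corresponds R (X ∩ X') (Y ∩ Y') :=
  fun _ _ ha => and_congr (hXY ha) (hXY' ha)

theorem conv (hXY : Corresponds R X Y) : Corresponds R (rbConv X) (rbConv Y) :=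
  fun _ _ ha => hXY ha.conv

end Corresponds

theorem greenPart_mirrorElt (X : Set (RbAtom V F)) (Y : Set W) : greenPart (mirrorElt X Y) = Y :=
  rfl

theorem mirrorElt_mirrorElt_greenPart (Y : Set (RbAtom W F)) (X : Set V) :
    mirrorElt (mirrorElt Y X) (greenPart Y) = Y := by
  ext a
  cases a <;> rfl

theorem corresponds_mirrorElt {Z : Set W}
    (hZ : ∀ ⦃i j⦄, (i, j) ∈ R → (i ∈ greenPart X ↔ j ∈ Z)) :
    Corresponds R X (mirrorElt X Z) := by
  intro a a' ha
  cases ha with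
  | green hij => exact hZ hij
  | _ => exact Iff.rfl

end Corresponds

section Terms

variable {G H F : BinStruct σ} {L : SetRel G.V H.V}
  {X X' : Set (RbAtom G.V F.V)} {Y Y' : Set (RbAtom H.V F.V)}

theorem HasForth.mem_rbComp (hL : HasForth G H L) (hXY : Corresponds L X Y)
    (hXY' : Corresponds L X' Y') {c : RbAtom G.V F.V} {c' : RbAtom H.V F.V}
    (hc : RbAtom.LiftRel L c c') (hmem : c ∈ rbComp G F X X') : c' ∈ rbComp H F Y Y' := by
  obtain ⟨a, haX, b, hbX', hn⟩ := hmem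
  obtain ⟨R, hRL, hR, hc, a', b', ha, hb⟩ := hL.exists_liftRel_triple hc hn
  exact ⟨a', (hXY (ha.mono hRL)).1 haX, b', (hXY' (hb.mono hRL)).1 hbX',
    fun hf => hn (hR.forbidden ha hb hc hf)⟩

theorem Corresponds.rbComp (hL : HasForth G H L) (hL' : HasForth H G L.inv)
    (hXY : Corresponds L X Y) (hXY' : Corresponds L X' Y') :
    Corresponds L (rbComp G F X X') (rbComp H F Y Y') :=
  fun _ _ hc => ⟨hL.mem_rbComp hXY hXY' hc, hL'.mem_rbComp hXY.inv hXY'.inv hc.inv⟩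

theorem corresponds_evalo (hL : HasForth G H L) (hL' : HasForth H G L.inv) {c : ℕ}
    {α : Fin c → Option (Set (RbAtom G.V F.V))} {β : Fin c → Option (Set (RbAtom H.V F.V))}
    (hvar : ∀ i X Y, α i = some X → β i = some Y → Corresponds L X Y) (t : RATerm c) :
    ∀ X Y, t.evalo (rbOps G F) α = some X → t.evalo (rbOps H F) β = some Y →
      Corresponds L X Y := by
  induction t with
  | var i => exact hvar i
  | bot => rintro _ _ ⟨⟩ ⟨⟩; exact .empty
  | top => rintro _ _ ⟨⟩ ⟨⟩; exact .univ
  | one' => rintro _ _ ⟨⟩ ⟨⟩; exact .singleton_id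
  | compl t iht =>
    simp only [RATerm.evalo, Option.map_eq_some_iff]
    rintro _ _ ⟨X, hX, rfl⟩ ⟨Y, hY, rfl⟩
    exact (iht X Y hX hY).compl
  | conv t iht =>
    simp only [RATerm.evalo, Option.map_eq_some_iff]
    rintro _ _ ⟨X, hX, rfl⟩ ⟨Y, hY, rfl⟩
    exact (iht X Y hX hY).conv
  | sup s t ihs iht =>
    simp only [RATerm.evalo, Option.bind_eq_some_iff, Option.map_eq_some_iff]
    rintro _ _ ⟨X, hX, X', hX', rfl⟩ ⟨Y, hY, Y', hY', rfl⟩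
    exact (ihs X Y hX hY).union (iht X' Y' hX' hY')
  | inf s t ihs iht =>
    simp only [RATerm.evalo, Option.bind_eq_some_iff, Option.map_eq_some_iff]
    rintro _ _ ⟨X, hX, X', hX', rfl⟩ ⟨Y, hY, Y', hY', rfl⟩
    exact (ihs X Y hX hY).inter (iht X' Y' hX' hY')
  | comp s t ihs iht =>
    simp only [RATerm.evalo, Option.bind_eq_some_iff, Option.map_eq_some_iff]
    rintro _ _ ⟨X, hX, X', hX', rfl⟩ ⟨Y, hY, Y', hY', rfl⟩
    exact (ihs X Y hX hY).rbComp hL hL' (iht X' Y' hX' hY')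

end Terms

/-! ## Mirrored states -/

section Mirror

variable {G H F : BinStruct σ} {c : ℕ} {s : MirrorState c G H F}

/-- Every pebbled pair consists of mirror images whose green parts are marked by the colour of the
pebble, and that colour is recorded as used. -/
def MirrorState.IsMirrored (s : MirrorState c G H F) : Prop :=
  ∀ i X, s.α i = some X → liftCol i ∈ s.used ∧ s.g (liftCol i) = greenPart X ∧
    s.β i = some (mirrorElt X (s.h (liftCol i)))

namespace MirrorState.IsMirrored

theorem update (hs : s.IsMirrored) (t : Fin c) (X : Set (RbAtom G.V F.V)) (Y : Set H.V) :
    IsMirrored (G := G) (F := F) ⟨Function.update s.α t (some X),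
      Function.update s.β t (some (mirrorElt X Y)),
      Function.update s.g (liftCol t) (greenPart X), Function.update s.h (liftCol t) Y,
      insert (liftCol t) s.used⟩ := by
  intro i X' hX'
  by_cases hit : i = t
  · subst hit
    obtain rfl : X = X' := by simpa using hX'
    simp
  · have hcol : liftCol i ≠ liftCol t := (Fin.castLE_injective _).ne hit
    simp only [Function.update_of_ne hit, Function.update_of_ne hcol] at hX' ⊢
    exact (hs i X' hX').imp_left (Set.mem_insert_of_mem _)

end MirrorState.IsMirrored

theorem MirrorReachable.isMirrored {Inv : (Fin (c + 3) → Set G.V) → (Fin (c + 3) → Set H.V) → Prop}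
    (hs : MirrorReachable G H F c Inv s) : s.IsMirrored := by
  induction hs with
  | refl => exact fun _ _ hX => nomatch hX
  | tail _ hstep ih =>
    cases hstep with
    | fromG t x Y _ => exact ih.update t x Y
    | fromH t y X _ =>
      simpa only [greenPart_mirrorElt, mirrorElt_mirrorElt_greenPart] using
        ih.update t (mirrorElt y X) (greenPart y)

theorem nontrivial_compl_range_liftCol : (Set.range (liftCol (c := c)))ᶜ.Nontrivial := by
  have natAdd_notMem (j : Fin 3) : Fin.natAdd c j ∈ (Set.range (liftCol (c := c)))ᶜ := by
    rintro ⟨i, hi⟩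
    have hval : i.val = c + j.val := congrArg Fin.val hi
    omega
  exact ⟨_, natAdd_notMem 0, _, natAdd_notMem 1, by simp⟩

theorem MirrorState.IsMirrored.corresponds_evalo (hs : s.IsMirrored)
    {g : Fin (c + 3) → Set G.V} {h : Fin (c + 3) → Set H.V} (hgh : ExSurvives G H (c + 3) g h)
    (hg : Set.EqOn g s.g s.used) (hh : Set.EqOn h s.h s.used) {t : RATerm c}
    {X : Set (RbAtom G.V F.V)} {Y : Set (RbAtom H.V F.V)}
    (hX : t.evalo (rbOps G F) s.α = some X) (hY : t.evalo (rbOps H F) s.β = some Y) :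
    Corresponds (linked (Set.range liftCol) g h) X Y := by
  refine _root_.corresponds_evalo (hgh.hasForth_linked nontrivial_compl_range_liftCol)
    (inv_linked ▸ hgh.symm.hasForth_linked nontrivial_compl_range_liftCol) ?_ t X Y hX hY
  intro i X Y hX hY
  obtain ⟨hused, hgX, hβ⟩ := hs i X hX
  obtain rfl : mirrorElt X (s.h (liftCol i)) = Y := by simpa [hβ] using hY
  refine corresponds_mirrorElt fun x y hxy => ?_
  rw [← hgX, ← hg hused, ← hh hused]
  exact mem_iff_mem_of_linked hxy ⟨i, rfl⟩

theorem mirror_fresh_colour_forced_general (hs : s.IsMirrored) {t : RATerm c}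
    {X : Set (RbAtom G.V F.V)} {Y : Set (RbAtom H.V F.V)}
    (hX : t.evalo (rbOps G F) s.α = some X) (hY : t.evalo (rbOps H F) s.β = some Y)
    {k : Fin (c + 3)} (hk : k ∉ s.used) :
    (∀ T : Set H.V, T ≠ greenPart Y →
        AllForcesWin G H (c + 3)
          (Function.update s.g k (greenPart X)) (Function.update s.h k T)) ∧
    (∀ S : Set G.V, S ≠ greenPart X →
        AllForcesWin G H (c + 3)
          (Function.update s.g k S) (Function.update s.h k (greenPart Y))) := by
  have eq_iff_of_survives (S : Set G.V) (T : Set H.V)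
      (hw : ¬ AllForcesWin G H (c + 3) (Function.update s.g k S) (Function.update s.h k T)) :
      S = greenPart X ↔ T = greenPart Y := by
    have hsurv := exSurvives_of_not_allForcesWin hw
    have hXY := hs.corresponds_evalo hsurv
      (fun u hu => Function.update_of_ne (ne_of_mem_of_not_mem hu hk) ..)
      (fun u hu => Function.update_of_ne (ne_of_mem_of_not_mem hu hk) ..) hX hY
    simpa using hsurv.colour_eq_iff nontrivial_compl_range_liftCol
      (fun _ _ => hXY.mem_greenPart_iff) k
  exact ⟨fun T hT => by_contra fun hw => hT ((eq_iff_of_survives _ _ hw).1 rfl),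
    fun S hS => by_contra fun hw => hS ((eq_iff_of_survives _ _ hw).2 rfl)⟩

end Mirror

theorem mirror_fresh_colour_forced {σ : Type} (G H F : BinStruct σ) (c : ℕ)
    (Inv : (Fin (c + 3) → Set G.V) → (Fin (c + 3) → Set H.V) → Prop)
    (hInv : IsColInvariant G H (c + 3) Inv)
    (s : MirrorState c G H F) (hs : MirrorReachable G H F c Inv s)
    (t : RATerm c) (X : Set (RbAtom G.V F.V)) (Y : Set (RbAtom H.V F.V))
    (hX : t.evalo (rbOps G F) s.α = some X) (hY : t.evalo (rbOps H F) s.β = some Y)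
    (k : Fin (c + 3)) (hk : k ∉ s.used) :
    (∀ T : Set H.V, T ≠ greenPart Y →
        AllForcesWin G H (c + 3)
          (Function.update s.g k (greenPart X)) (Function.update s.h k T)) ∧
    (∀ S : Set G.V, S ≠ greenPart X →
        AllForcesWin G H (c + 3)
          (Function.update s.g k S) (Function.update s.h k (greenPart Y))) :=
  mirror_fresh_colour_forced_general hs.isMirrored hX hY hk
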